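/- Let T be an ergodic automorphism of a standard probability Borel space (X, ℬ, μ). If T is not mixing, then T has a non-trivial factor which is disjoint (in the sense of Furstenberg) from all mixing automorphisms. (Parreau) -/

import Mathlib

open MeasureTheory Filter
open scoped Topology

universe u

/-- A measure-preserving map is mixing: `μ(f⁻ⁿA ∩ B) → μ(A)μ(B)` for all measurable `A, B`. -/
def MixingMap {Z : Type*} [MeasurableSpace Z] (f : Z → Z) (μ : Measure Z) : Prop :=
  ∀ A B : Set Z, MeasurableSet A → MeasurableSet B →
    Tendsto (fun n : ℕ => μ ((f^[n]) ⁻¹' A ∩ B)) atTop (𝓝 (μ A * μ B))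

/-- `ρ` is a joining of the factor system `(X, 𝒞, μ', T)` and the system `(W, σ, S)`:
a probability measure on `X × W` (with the σ-algebra `𝒞 ⊗ mW`), with marginals `μ'` and
`σ`, invariant under `T × S`. -/
def IsFactorJoining {X W : Type*} (mX' : MeasurableSpace X) (mW : MeasurableSpace W)
    (μ' : @Measure X mX') (σ : @Measure W mW) (T : X → X) (S : W → W)
    (ρ : @Measure (X × W) (mX'.prod mW)) : Prop :=
  letI := mX'
  letI := mW
  @IsProbabilityMeasure _ _ ρ ∧
    @Measure.map _ _ (mX'.prod mW) mX' Prod.fst ρ = μ' ∧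
    @Measure.map _ _ (mX'.prod mW) mW Prod.snd ρ = σ ∧
    @Measure.map _ _ (mX'.prod mW) (mX'.prod mW) (Prod.map T S) ρ = ρ

/-!
If `T` is not mixing, there are an ultrafilter `𝒰` on `ℕ` finer than `atTop` and a set `B` for
which the weak `L²` limit of `1_B ∘ T⁻ⁿ` along `𝒰` is not constant. The factor is generated by all
weak limits `φ = lim f ∘ T⁻ⁿ` along `𝒰` with `0 ≤ f ≤ 1`; it is non-trivial and invariant.

For disjointness, let `ρ` be a joining with a mixing system `S`, let `g` be the centered indicator
of an event of the second coordinate, and suppose that `P = ∏ i ∈ s, φᵢ` is a product of such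
limits. If `φ` is one more limit, of `f ∘ T⁻ⁿ`, then by invariance of `ρ` the correlation
`∫ g P φ ∂ρ` is the limit along `𝒰` of `∫ (g ∘ Sⁿ) (P ∘ Tⁿ) f ∂ρ`. To see that these integrals tend
to `0`, one bounds `∫ (∑ n ∈ J, (g ∘ Sⁿ) (P ∘ Tⁿ))² ∂ρ` for finite `J`. By a Schur product argument
the matrix of the products `(P ∘ Tⁿ) (P ∘ Tᵐ)` is dominated by the matrix of the
`∏ i ∈ s, χᵢₙₘ`, where `χᵢₙₘ` is the weak limit attached to `(fᵢ ∘ Tⁿ) (fᵢ ∘ Tᵐ)`. These are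
products of `|s|` limits again, so by induction on `s` they are uncorrelated with the second
coordinate, and the bound becomes `∑ n ∈ J, ∑ m ∈ J, |∫ (g ∘ Sⁿ) (g ∘ Sᵐ) ∂σ|`, in which the
terms with `|n - m|` large are small by mixing. Hence all products of limits are uncorrelated with
the second coordinate, and monomials in the generators determine a measure on the factor.
-/

section SumsAlongDistances

lemma card_filter_natDist_lt_le (J : Finset ℕ) (n N : ℕ) :
    (J.filter fun m => Nat.dist n m < N).card ≤ 2 * N := by
  have hsub : (J.filter fun m => Nat.dist n m < N) ⊆ Finset.Ico (n - N) (n + N) := by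
    intro m hm
    have hlt : Nat.dist n m < N := (Finset.mem_filter.1 hm).2
    rw [Finset.mem_Ico]
    unfold Nat.dist at hlt
    lia
  calc (J.filter fun m => Nat.dist n m < N).card ≤ (Finset.Ico (n - N) (n + N)).card :=
        Finset.card_le_card hsub
    _ ≤ 2 * N := by rw [Nat.card_Ico]; lia

lemma sum_natDist_le {γ : ℕ → ℝ} {N : ℕ} {D δ : ℝ} (hD : ∀ j, |γ j| ≤ D)
    (hδ : ∀ j ≥ N, |γ j| ≤ δ) (J : Finset ℕ) (n : ℕ) :
    ∑ m ∈ J, γ (Nat.dist n m) ≤ 2 * N * D + J.card * δ := by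
  have hD0 : 0 ≤ D := (abs_nonneg _).trans (hD 0)
  have hδ0 : 0 ≤ δ := (abs_nonneg _).trans (hδ N le_rfl)
  have hnear : ∑ m ∈ J with Nat.dist n m < N, γ (Nat.dist n m) ≤ 2 * N * D :=
    calc ∑ m ∈ J with Nat.dist n m < N, γ (Nat.dist n m)
        ≤ (J.filter fun m => Nat.dist n m < N).card * D := by
          rw [← nsmul_eq_mul]
          exact Finset.sum_le_card_nsmul _ _ _ fun m _ => (le_abs_self _).trans (hD _)
      _ ≤ 2 * N * D := by
          gcongr
          exact_mod_cast card_filter_natDist_lt_le J n N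
  have hfar : ∑ m ∈ J with ¬ Nat.dist n m < N, γ (Nat.dist n m) ≤ J.card * δ :=
    calc ∑ m ∈ J with ¬ Nat.dist n m < N, γ (Nat.dist n m)
        ≤ (J.filter fun m => ¬ Nat.dist n m < N).card * δ := by
          rw [← nsmul_eq_mul]
          refine Finset.sum_le_card_nsmul _ _ _ fun m hm => (le_abs_self _).trans (hδ _ ?_)
          exact not_lt.1 (Finset.mem_filter.1 hm).2
      _ ≤ J.card * δ := by
          gcongr
          exact Finset.filter_subset _ _
  rw [← Finset.sum_filter_add_sum_filter_not J fun m => Nat.dist n m < N]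
  exact add_le_add hnear hfar

variable {a γ : ℕ → ℝ}

/- Applied to large finite subsets of `{n | ε ≤ a n}`, the hypothesis forces this set to be
finite. -/
lemma eventually_lt_of_sq_sum_le (hγ : Tendsto γ atTop (𝓝 0))
    (h : ∀ J : Finset ℕ, (∑ n ∈ J, a n) ^ 2 ≤ ∑ n ∈ J, ∑ m ∈ J, γ (Nat.dist n m))
    {ε : ℝ} (hε : 0 < ε) : ∀ᶠ n in atTop, a n < ε := by
  by_contra hfreq
  have hinf : {n | ε ≤ a n}.Infinite :=
    Nat.frequently_atTop_iff_infinite.1 (by simpa only [not_eventually, not_lt] using hfreq)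
  obtain ⟨D, hD⟩ : ∃ D, ∀ j, |γ j| ≤ D := by
    obtain ⟨D, hD⟩ := hγ.abs.bddAbove_range
    exact ⟨D, fun j => hD ⟨j, rfl⟩⟩
  obtain ⟨N, hN⟩ : ∃ N, ∀ j ≥ N, |γ j| ≤ ε ^ 2 / 2 := by
    have hsmall : ∀ᶠ j in atTop, |γ j| < ε ^ 2 / 2 :=
      hγ.abs.eventually_lt_const (by rw [abs_zero]; positivity)
    obtain ⟨N, hN⟩ := eventually_atTop.1 hsmall
    exact ⟨N, fun j hj => (hN j hj).le⟩
  obtain ⟨M, hM⟩ := exists_nat_gt (2 * N * D / (ε ^ 2 / 2))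
  obtain ⟨J, hJ, rfl⟩ := hinf.exists_subset_card_eq M
  have hlower : J.card * ε ≤ ∑ n ∈ J, a n := by
    rw [← nsmul_eq_mul]
    exact Finset.card_nsmul_le_sum _ _ _ fun n hn => hJ hn
  have hupper : (∑ n ∈ J, a n) ^ 2 ≤ J.card * (2 * N * D + J.card * (ε ^ 2 / 2)) := by
    refine (h J).trans ?_
    rw [← nsmul_eq_mul]
    exact Finset.sum_le_card_nsmul _ _ _ fun n _ => sum_natDist_le hD hN J n
  have hD0 : 0 ≤ D := (abs_nonneg _).trans (hD 0)
  have hcard : (0 : ℝ) < J.card := lt_of_le_of_lt (by positivity) hM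
  have hlarge : 2 * N * D < J.card * (ε ^ 2 / 2) := (div_lt_iff₀ (by positivity)).1 hM
  have hcontr : J.card * (J.card * ε ^ 2) < J.card * (J.card * ε ^ 2) :=
    calc (J.card : ℝ) * (J.card * ε ^ 2) = (J.card * ε) ^ 2 := by ring
      _ ≤ (∑ n ∈ J, a n) ^ 2 := by gcongr
      _ ≤ J.card * (2 * N * D + J.card * (ε ^ 2 / 2)) := hupper
      _ < J.card * (J.card * (ε ^ 2 / 2) + J.card * (ε ^ 2 / 2)) := by gcongr
      _ = J.card * (J.card * ε ^ 2) := by ring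
  exact lt_irrefl _ hcontr

lemma tendsto_zero_of_sq_sum_le (hγ : Tendsto γ atTop (𝓝 0))
    (h : ∀ J : Finset ℕ, (∑ n ∈ J, a n) ^ 2 ≤ ∑ n ∈ J, ∑ m ∈ J, γ (Nat.dist n m)) :
    Tendsto a atTop (𝓝 0) := by
  have hneg : ∀ J : Finset ℕ,
      (∑ n ∈ J, -a n) ^ 2 ≤ ∑ n ∈ J, ∑ m ∈ J, γ (Nat.dist n m) := fun J => by
    rw [Finset.sum_neg_distrib, neg_sq]
    exact h J
  refine Metric.tendsto_nhds.2 fun ε hε => ?_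
  filter_upwards [eventually_lt_of_sq_sum_le hγ h hε, eventually_lt_of_sq_sum_le hγ hneg hε]
    with n hn hn'
  rw [Real.dist_eq, sub_zero]
  exact abs_lt.2 ⟨by linarith, hn⟩

end SumsAlongDistances

section WeakConvergence

/-- Weak convergence `F n ⇀ φ` in `L²(μ)` along the filter `l`, for real functions rather than for
their classes in `Lp`. -/
structure TendstoWeakly {X ι : Type*} [MeasurableSpace X] (μ : Measure X) (l : Filter ι)
    (F : ι → X → ℝ) (φ : X → ℝ) : Prop where
  memLp : ∀ n, MemLp (F n) 2 μ
  memLp_limit : MemLp φ 2 μ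
  tendsto_integral_mul : ∀ u : X → ℝ, MemLp u 2 μ →
    Tendsto (fun n => ∫ x, u x * F n x ∂μ) l (𝓝 (∫ x, u x * φ x ∂μ))

variable {X Y ι : Type*} [MeasurableSpace X] [MeasurableSpace Y] {μ : Measure X} {ν : Measure Y}
  {l : Filter ι} {F G : ι → X → ℝ} {φ ψ : X → ℝ}

lemma inner_toLp_eq_integral_mul {u v : X → ℝ} (hu : MemLp u 2 μ) (hv : MemLp v 2 μ) :
    inner ℝ (hu.toLp u) (hv.toLp v) = ∫ x, u x * v x ∂μ := by
  rw [L2.inner_def]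
  refine integral_congr_ae ?_
  filter_upwards [hu.coeFn_toLp, hv.coeFn_toLp] with x hux hvx
  rw [hux, hvx, Real.inner_apply]

lemma exists_tendsto_inner_of_norm_le {E : Type*} [NormedAddCommGroup E] [InnerProductSpace ℝ E]
    [CompleteSpace E] (𝒰 : Ultrafilter ι) {v : ι → E} {R : ℝ} (hv : ∀ n, ‖v n‖ ≤ R) :
    ∃ x : E, ∀ u : E, Tendsto (fun n => inner ℝ u (v n)) 𝒰 (𝓝 (inner ℝ u x)) := by
  let D : ι → WeakDual ℝ E := fun n => (InnerProductSpace.toDual ℝ E (v n)).toWeakDual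
  have hD : ∀ n, D n ∈ WeakDual.toStrongDual ⁻¹' Metric.closedBall 0 R := fun n => by
    rw [Set.mem_preimage, mem_closedBall_zero_iff]
    exact ((InnerProductSpace.toDual ℝ E).norm_map (v n)).trans_le (hv n)
  obtain ⟨y, -, hy⟩ := (WeakDual.isCompact_closedBall (𝕜 := ℝ) (E := E) 0 R).ultrafilter_le_nhds
    (𝒰.map D) (tendsto_principal.2 (Eventually.of_forall hD))
  refine ⟨(InnerProductSpace.toDual ℝ E).symm (WeakDual.toStrongDual y), fun u => ?_⟩
  have hyu : Tendsto (fun n => D n u) 𝒰 (𝓝 (y u)) :=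
    ((WeakDual.eval_continuous u).tendsto y).comp hy
  simp only [real_inner_comm _ u, InnerProductSpace.toDual_symm_apply]
  exact hyu

lemma exists_tendstoWeakly (𝒰 : Ultrafilter ι) (hF : ∀ n, MemLp (F n) 2 μ) {R : ℝ}
    (hR : ∀ n, ‖(hF n).toLp (F n)‖ ≤ R) : ∃ φ, StronglyMeasurable φ ∧ TendstoWeakly μ 𝒰 F φ := by
  obtain ⟨y, hy⟩ := exists_tendsto_inner_of_norm_le 𝒰 hR
  refine ⟨y, Lp.stronglyMeasurable y, hF, Lp.memLp y, fun u hu => ?_⟩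
  have hlim := hy (hu.toLp u)
  rw [← Lp.toLp_coeFn y (Lp.memLp y)] at hlim
  simpa only [inner_toLp_eq_integral_mul] using hlim

namespace TendstoWeakly

lemma const (hφ : MemLp φ 2 μ) : TendstoWeakly μ l (fun _ => φ) φ :=
  ⟨fun _ => hφ, hφ, fun _ _ => tendsto_const_nhds⟩

lemma sub (hF : TendstoWeakly μ l F φ) (hG : TendstoWeakly μ l G ψ) :
    TendstoWeakly μ l (fun n => F n - G n) (φ - ψ) where
  memLp n := (hF.memLp n).sub (hG.memLp n)
  memLp_limit := hF.memLp_limit.sub hG.memLp_limit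
  tendsto_integral_mul u hu := by
    have integral_mul_sub : ∀ {f g : X → ℝ}, MemLp f 2 μ → MemLp g 2 μ →
        ∫ x, u x * (f - g) x ∂μ = ∫ x, u x * f x ∂μ - ∫ x, u x * g x ∂μ := fun hf hg => by
      simpa only [Pi.sub_apply, Pi.mul_apply, mul_sub] using
        integral_sub (hu.integrable_mul hf) (hu.integrable_mul hg)
    simp only [integral_mul_sub (hF.memLp _) (hG.memLp _),
      integral_mul_sub hF.memLp_limit hG.memLp_limit]
    exact (hF.tendsto_integral_mul u hu).sub (hG.tendsto_integral_mul u hu)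

lemma finset_sum {κ : Type*} (s : Finset κ) {F : κ → ι → X → ℝ} {φ : κ → X → ℝ}
    (h : ∀ k ∈ s, TendstoWeakly μ l (F k) (φ k)) :
    TendstoWeakly μ l (fun n x => ∑ k ∈ s, F k n x) (fun x => ∑ k ∈ s, φ k x) where
  memLp n := memLp_finsetSum s fun k hk => (h k hk).memLp n
  memLp_limit := memLp_finsetSum s fun k hk => (h k hk).memLp_limit
  tendsto_integral_mul u hu := by
    have integral_mul_sum : ∀ {f : κ → X → ℝ}, (∀ k ∈ s, MemLp (f k) 2 μ) →
        ∫ x, u x * ∑ k ∈ s, f k x ∂μ = ∑ k ∈ s, ∫ x, u x * f k x ∂μ := fun hf => by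
      simpa only [Finset.mul_sum, Pi.mul_apply] using
        integral_finsetSum s fun k hk => hu.integrable_mul (hf k hk)
    simp only [integral_mul_sum fun k hk => (h k hk).memLp _,
      integral_mul_sum fun k hk => (h k hk).memLp_limit]
    exact tendsto_finsetSum s fun k hk => (h k hk).tendsto_integral_mul u hu

lemma mul_left (hF : TendstoWeakly μ l F φ) {g : X → ℝ} (hg : MemLp g ⊤ μ) :
    TendstoWeakly μ l (fun n => g * F n) (g * φ) where
  memLp n := (hF.memLp n).mul hg
  memLp_limit := hF.memLp_limit.mul hg
  tendsto_integral_mul u hu := by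
    simpa only [Pi.mul_apply, mul_assoc] using hF.tendsto_integral_mul (u * g) (hg.mul hu)

lemma congr_limit (hF : TendstoWeakly μ l F φ) (h : φ =ᵐ[μ] ψ) : TendstoWeakly μ l F ψ where
  memLp := hF.memLp
  memLp_limit := hF.memLp_limit.ae_eq h
  tendsto_integral_mul u hu := by
    rw [← integral_congr_ae (h.mono fun x hx => congrArg (u x * ·) hx)]
    exact hF.tendsto_integral_mul u hu

lemma tendsto_setIntegral [IsFiniteMeasure μ] (hF : TendstoWeakly μ l F φ) {s : Set X}
    (hs : MeasurableSet s) :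
    Tendsto (fun n => ∫ x in s, F n x ∂μ) l (𝓝 (∫ x in s, φ x ∂μ)) := by
  have hlim := hF.tendsto_integral_mul (s.indicator 1) ((memLp_const (1 : ℝ)).indicator hs)
  simpa only [← Set.indicator_mul_left, Pi.one_apply, one_mul, integral_indicator hs] using hlim

lemma ae_nonneg [IsFiniteMeasure μ] [l.NeBot] (hF : TendstoWeakly μ l F φ)
    (h : ∀ n x, 0 ≤ F n x) : 0 ≤ᵐ[μ] φ := by
  refine ae_nonneg_of_forall_setIntegral_nonneg (hF.memLp_limit.integrable one_le_two)
    fun s hs _ => ?_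
  exact ge_of_tendsto' (hF.tendsto_setIntegral hs) fun n => integral_nonneg (h n)

lemma ae_le [IsFiniteMeasure μ] [l.NeBot] (hF : TendstoWeakly μ l F φ)
    (hG : TendstoWeakly μ l G ψ) (h : ∀ n x, F n x ≤ G n x) : φ ≤ᵐ[μ] ψ :=
  ((hG.sub hF).ae_nonneg fun n x => sub_nonneg.2 (h n x)).mono fun _ hx => sub_nonneg.1 hx

end TendstoWeakly

/- The function `v` is the image of `u` under the adjoint of the isometry `h ↦ h ∘ π`. -/
lemma exists_memLp_forall_integral_mul_comp_eq {π : X → Y} (hπ : MeasurePreserving π μ ν)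
    {u : X → ℝ} (hu : MemLp u 2 μ) :
    ∃ v, MemLp v 2 ν ∧
      ∀ h : Y → ℝ, MemLp h 2 ν → ∫ x, u x * h (π x) ∂μ = ∫ y, v y * h y ∂ν := by
  let U : Lp ℝ 2 ν →L[ℝ] Lp ℝ 2 μ :=
    (Lp.compMeasurePreservingₗᵢ ℝ π hπ).toContinuousLinearMap
  refine ⟨U.adjoint (hu.toLp u), Lp.memLp _, fun h hh => ?_⟩
  calc ∫ x, u x * h (π x) ∂μ
      = inner ℝ (hu.toLp u) (U (hh.toLp h)) :=
        (inner_toLp_eq_integral_mul hu (hh.comp_measurePreserving hπ)).symm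
    _ = inner ℝ (U.adjoint (hu.toLp u)) (hh.toLp h) :=
        (ContinuousLinearMap.adjoint_inner_left U _ _).symm
    _ = ∫ y, U.adjoint (hu.toLp u) y * h y ∂ν := by
        rw [← inner_toLp_eq_integral_mul (Lp.memLp _) hh, Lp.toLp_coeFn]

lemma TendstoWeakly.comp_measurePreserving {F : ι → Y → ℝ} {φ : Y → ℝ}
    (hF : TendstoWeakly ν l F φ) {π : X → Y} (hπ : MeasurePreserving π μ ν) :
    TendstoWeakly μ l (fun n => F n ∘ π) (φ ∘ π) where
  memLp n := (hF.memLp n).comp_measurePreserving hπ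
  memLp_limit := hF.memLp_limit.comp_measurePreserving hπ
  tendsto_integral_mul u hu := by
    obtain ⟨v, hv, huv⟩ := exists_memLp_forall_integral_mul_comp_eq hπ hu
    simp only [Function.comp_apply, huv _ (hF.memLp _), huv _ hF.memLp_limit]
    exact hF.tendsto_integral_mul v hv

end WeakConvergence

section UnitIntervalValued

variable {X ι : Type*} [MeasurableSpace X] {μ : Measure X}

lemma memLp_unitInterval [IsFiniteMeasure μ] {f : X → unitInterval} (hf : Measurable f)
    (p : ENNReal) : MemLp (fun x => (f x : ℝ)) p μ :=
  MemLp.of_bound hf.subtype_val.aestronglyMeasurable 1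
    (ae_of_all _ fun x => (Real.norm_of_nonneg (f x).2.1).trans_le (f x).2.2)

lemma memLp_prod_unitInterval [IsFiniteMeasure μ] (s : Finset ι) {f : ι → X → unitInterval}
    (hf : ∀ i ∈ s, Measurable (f i)) (p : ENNReal) :
    MemLp (fun x => ∏ i ∈ s, (f i x : ℝ)) p μ := by
  refine MemLp.of_bound
    (Finset.measurable_fun_prod s fun i hi => (hf i hi).subtype_val).aestronglyMeasurable 1
    (ae_of_all _ fun x => ?_)
  rw [Real.norm_of_nonneg (Finset.prod_nonneg fun i _ => (f i x).2.1)]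
  exact Finset.prod_le_one (fun i _ => (f i x).2.1) fun i _ => (f i x).2.2

lemma integral_prod_unitInterval_mem_Icc [IsProbabilityMeasure μ] (s : Finset ι)
    {f : ι → X → unitInterval} (hf : ∀ i ∈ s, Measurable (f i)) :
    ∫ x, ∏ i ∈ s, (f i x : ℝ) ∂μ ∈ Set.Icc 0 1 := by
  refine ⟨integral_nonneg fun x => Finset.prod_nonneg fun i _ => (f i x).2.1, ?_⟩
  calc ∫ x, ∏ i ∈ s, (f i x : ℝ) ∂μ ≤ ∫ _, 1 ∂μ :=
        integral_mono ((memLp_prod_unitInterval s hf 1).integrable le_rfl) (integrable_const 1)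
          fun x => Finset.prod_le_one (fun i _ => (f i x).2.1) fun i _ => (f i x).2.2
    _ = 1 := by simp

lemma exists_measurable_unitInterval_ae_eq {f : X → ℝ} (hf : Measurable f)
    (h₀ : ∀ᵐ x ∂μ, 0 ≤ f x) (h₁ : ∀ᵐ x ∂μ, f x ≤ 1) :
    ∃ g : X → unitInterval, Measurable g ∧ f =ᵐ[μ] fun x => (g x : ℝ) := by
  refine ⟨fun x => Set.projIcc 0 1 zero_le_one (f x), continuous_projIcc.measurable.comp hf, ?_⟩
  filter_upwards [h₀, h₁] with x hx₀ hx₁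
  rw [Set.projIcc_of_mem zero_le_one ⟨hx₀, hx₁⟩]

lemma exists_tendstoWeakly_unitInterval [IsFiniteMeasure μ] (𝒰 : Ultrafilter ι)
    {F : ι → X → unitInterval} (hF : ∀ n, Measurable (F n)) :
    ∃ φ : X → unitInterval, Measurable φ ∧ TendstoWeakly μ 𝒰 (fun n x => F n x) (fun x => φ x) := by
  have hmem : ∀ n, MemLp (fun x => (F n x : ℝ)) 2 μ := fun n => memLp_unitInterval (hF n) 2
  have hbound : ∀ n, ∀ᵐ x ∂μ, ‖(hmem n).toLp _ x‖ ≤ 1 := fun n => by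
    filter_upwards [(hmem n).coeFn_toLp] with x hx
    rw [hx]
    exact (Real.norm_of_nonneg (F n x).2.1).trans_le (F n x).2.2
  obtain ⟨y, hy, hlim⟩ := exists_tendstoWeakly 𝒰 hmem
    fun n => Lp.norm_le_of_ae_bound zero_le_one (hbound n)
  obtain ⟨φ, hφ, hyφ⟩ := exists_measurable_unitInterval_ae_eq hy.measurable
    (hlim.ae_nonneg fun n x => (F n x).2.1)
    (hlim.ae_le (TendstoWeakly.const (memLp_const 1)) fun n x => (F n x).2.2)
  exact ⟨φ, hφ, hlim.congr_limit hyφ⟩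

end UnitIntervalValued

section Covariance

open scoped Matrix

variable {X ι κ : Type*} [MeasurableSpace X] {μ : Measure X} {l : Filter ι}

lemma TendstoWeakly.sub_mul_sub {F G : ι → X → ℝ} {φ ψ χ : X → ℝ} (hF : TendstoWeakly μ l F φ)
    (hG : TendstoWeakly μ l G ψ) (hFG : TendstoWeakly μ l (fun n => F n * G n) χ)
    (hφ : MemLp φ ⊤ μ) (hψ : MemLp ψ ⊤ μ) :
    TendstoWeakly μ l (fun n => (F n - φ) * (G n - ψ)) (χ - φ * ψ) := by
  have hlim := (hFG.sub (hF.mul_left hψ)).sub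
    ((hG.mul_left hφ).sub (TendstoWeakly.const (hG.memLp_limit.mul hφ)))
  convert hlim using 1
  · ext n x
    simp only [Pi.mul_apply, Pi.sub_apply]
    ring
  · ext x
    simp only [Pi.mul_apply, Pi.sub_apply]
    ring

lemma star_dotProduct_mulVec_eq_sum [Fintype κ] (A : Matrix κ κ ℝ) (c : κ → ℝ) :
    star c ⬝ᵥ A *ᵥ c = ∑ k, ∑ k', c k * c k' * A k k' := by
  simp only [dotProduct, Matrix.mulVec, Finset.mul_sum, Pi.star_apply, star_trivial]
  exact Finset.sum_congr rfl fun k _ => Finset.sum_congr rfl fun k' _ => by ring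

lemma posSemidef_of_forall_rat [Fintype κ] {A : Matrix κ κ ℝ} (hA : A.IsHermitian)
    (h : ∀ c : κ → ℚ, 0 ≤ ∑ k, ∑ k', (c k * c k' : ℝ) * A k k') : A.PosSemidef := by
  refine Matrix.PosSemidef.of_dotProduct_mulVec_nonneg hA fun c => ?_
  rw [star_dotProduct_mulVec_eq_sum]
  have hdense : DenseRange fun (c : κ → ℚ) k => (c k : ℝ) :=
    DenseRange.piMap fun _ => Rat.denseRange_cast
  refine hdense.induction_on (p := fun c : κ → ℝ => 0 ≤ ∑ k, ∑ k', c k * c k' * A k k') c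
    (isClosed_le continuous_const (by fun_prop)) h

/- The limit of the squares `(∑ k, c k * (F k n - Φ k)) ^ 2` is nonnegative for each of the
countably many rational vectors `c`, hence almost everywhere for all of them at once. -/
lemma TendstoWeakly.ae_posSemidef_covariance [Finite κ] [IsFiniteMeasure μ] [l.NeBot]
    {F : κ → ι → X → ℝ} {Φ : κ → X → ℝ} {χ : κ → κ → X → ℝ}
    (hF : ∀ k, TendstoWeakly μ l (F k) (Φ k)) (hΦ : ∀ k, MemLp (Φ k) ⊤ μ)
    (hχ : ∀ k k', TendstoWeakly μ l (fun n => F k n * F k' n) (χ k k')) :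
    ∀ᵐ x ∂μ, (Matrix.of fun k k' => χ k k' x - Φ k x * Φ k' x).PosSemidef := by
  have := Fintype.ofFinite κ
  have hsymm : ∀ᵐ x ∂μ, ∀ k k', χ k k' x ≤ χ k' k x := by
    simp only [ae_all_iff]
    exact fun k k' => (hχ k k').ae_le (hχ k' k) fun n x => (mul_comm (F k n x) (F k' n x)).le
  have hform : ∀ᵐ x ∂μ, ∀ c : κ → ℚ,
      0 ≤ ∑ k, ∑ k', (c k * c k' : ℝ) * (χ k k' x - Φ k x * Φ k' x) := by
    refine ae_all_iff.2 fun c => ?_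
    have hlim : TendstoWeakly μ l
        (fun n x => ∑ k, ∑ k', (c k * c k' : ℝ) * ((F k n x - Φ k x) * (F k' n x - Φ k' x)))
        (fun x => ∑ k, ∑ k', (c k * c k' : ℝ) * (χ k k' x - Φ k x * Φ k' x)) :=
      TendstoWeakly.finset_sum _ fun k _ => TendstoWeakly.finset_sum _ fun k' _ =>
        ((hF k).sub_mul_sub (hF k') (hχ k k') (hΦ k) (hΦ k')).mul_left
          (memLp_top_const (c k * c k' : ℝ))
    refine hlim.ae_nonneg fun n x => ?_
    have hsq : ∑ k, ∑ k', (c k * c k' : ℝ) * ((F k n x - Φ k x) * (F k' n x - Φ k' x))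
        = (∑ k, c k * (F k n x - Φ k x)) ^ 2 := by
      rw [sq, Finset.sum_mul_sum]
      exact Finset.sum_congr rfl fun k _ => Finset.sum_congr rfl fun k' _ => by ring
    exact hsq ▸ sq_nonneg _
  filter_upwards [hsymm, hform] with x hx hc
  refine posSemidef_of_forall_rat (Matrix.IsHermitian.ext fun k k' => ?_) hc
  rw [star_trivial, Matrix.of_apply, Matrix.of_apply, (hx k k').antisymm (hx k' k),
    mul_comm (Φ k x)]

end Covariance

section SchurProduct

variable {ι κ : Type*}

lemma posSemidef_prod_sub_vecMulVec [Finite κ] (s : Finset ι) {A : ι → Matrix κ κ ℝ} {a : ι → κ → ℝ}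
    (h : ∀ i ∈ s, (A i - Matrix.vecMulVec (a i) (a i)).PosSemidef) :
    (Matrix.of (fun k k' => ∏ i ∈ s, A i k k')
      - Matrix.vecMulVec (fun k => ∏ i ∈ s, a i k) (fun k => ∏ i ∈ s, a i k)).PosSemidef := by
  have := Fintype.ofFinite κ
  classical
  induction s using Finset.induction_on with
  | empty =>
    convert Matrix.PosSemidef.zero (n := κ) (R := ℝ) using 1
    ext k k'
    simp [Matrix.vecMulVec]
  | insert j s hj ih =>
    have hs := ih fun i hi => h i (Finset.mem_insert_of_mem hi)
    have hj' := h j (Finset.mem_insert_self j s)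
    set P := Matrix.of fun k k' => ∏ i ∈ s, A i k k'
    set p := fun k => ∏ i ∈ s, a i k
    have hrank_one : ∀ v : κ → ℝ, (Matrix.vecMulVec v v).PosSemidef := fun v => by
      simpa only [star_trivial] using Matrix.posSemidef_vecMulVec_self_star v
    have hP : P.PosSemidef := by simpa only [sub_add_cancel] using hs.add (hrank_one p)
    have hsplit : Matrix.of (fun k k' => ∏ i ∈ insert j s, A i k k')
        - Matrix.vecMulVec (fun k => ∏ i ∈ insert j s, a i k) (fun k => ∏ i ∈ insert j s, a i k)
        = (A j - Matrix.vecMulVec (a j) (a j)).hadamard P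
          + (Matrix.vecMulVec (a j) (a j)).hadamard (P - Matrix.vecMulVec p p) := by
      ext k k'
      simp only [P, p, Matrix.sub_apply, Matrix.add_apply, Matrix.of_apply, Matrix.vecMulVec_apply,
        Matrix.hadamard_apply, Finset.prod_insert hj]
      ring
    rw [hsplit]
    exact (hj'.hadamard hP).add ((hrank_one (a j)).hadamard hs)

lemma sq_sum_mul_prod_le [Fintype κ] (s : Finset ι) {A : ι → Matrix κ κ ℝ} {a : ι → κ → ℝ}
    (h : ∀ i ∈ s, (A i - Matrix.vecMulVec (a i) (a i)).PosSemidef) (c : κ → ℝ) :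
    (∑ k, c k * ∏ i ∈ s, a i k) ^ 2 ≤ ∑ k, ∑ k', c k * c k' * ∏ i ∈ s, A i k k' := by
  have hnonneg := (posSemidef_prod_sub_vecMulVec s h).dotProduct_mulVec_nonneg c
  rw [star_dotProduct_mulVec_eq_sum] at hnonneg
  have hsq : (∑ k, c k * ∏ i ∈ s, a i k) ^ 2
      = ∑ k, ∑ k', c k * c k' * ((∏ i ∈ s, a i k) * ∏ i ∈ s, a i k') := by
    rw [sq, Finset.sum_mul_sum]
    exact Finset.sum_congr rfl fun k _ => Finset.sum_congr rfl fun k' _ => by ring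
  rw [hsq, ← sub_nonneg]
  simp only [← Finset.sum_sub_distrib, ← mul_sub]
  exact hnonneg

end SchurProduct

section KoopmanLimits

variable {X ι κ : Type*} {m' mX : MeasurableSpace X} {μ : Measure X} {τ : X → X} {l : Filter ℕ}

/-- `φ` is a weak limit in `L²(μ)`, along `l`, of the functions `f ∘ τⁿ`. For the factor of Parreau,
`τ` is the inverse of the given automorphism; values in `[0, 1]` keep products bounded. -/
structure IsKoopmanLimit (μ : Measure X) (τ : X → X) (l : Filter ℕ)
    (f φ : X → unitInterval) : Prop where
  measurable : Measurable f
  measurable_limit : Measurable φ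
  tendstoWeakly : TendstoWeakly μ l (fun n x => f (τ^[n] x)) (fun x => φ x)

lemma exists_isKoopmanLimit [IsFiniteMeasure μ] (hτ : Measurable τ) (𝒰 : Ultrafilter ℕ)
    {f : X → unitInterval} (hf : Measurable f) : ∃ φ, IsKoopmanLimit μ τ 𝒰 f φ := by
  obtain ⟨φ, hφ, hlim⟩ := exists_tendstoWeakly_unitInterval (μ := μ) 𝒰
    fun n => hf.comp (hτ.iterate n)
  exact ⟨φ, hf, hφ, hlim⟩

lemma IsKoopmanLimit.comp_commute {f φ : X → unitInterval} (h : IsKoopmanLimit μ τ l f φ)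
    {R : X → X} (hR : MeasurePreserving R μ μ) (hcomm : Function.Commute R τ) :
    IsKoopmanLimit μ τ l (f ∘ R) (φ ∘ R) where
  measurable := h.measurable.comp hR.measurable
  measurable_limit := h.measurable_limit.comp hR.measurable
  tendstoWeakly := by
    have hlim := h.tendstoWeakly.comp_measurePreserving hR
    simp only [Function.comp_def] at hlim ⊢
    simpa only [fun n x => (hcomm.iterate_right n).eq x] using hlim

lemma exists_isKoopmanLimit_ae_sq_sum_le [IsFiniteMeasure μ] [Fintype κ] {𝒰 : Ultrafilter ℕ}
    {f φ : ι → X → unitInterval} (h : ∀ i, IsKoopmanLimit μ τ 𝒰 (f i) (φ i)) (hτ : Measurable τ)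
    {R : κ → X → X} (hR : ∀ k, MeasurePreserving (R k) μ μ)
    (hcomm : ∀ k, Function.Commute (R k) τ) (s : Finset ι) :
    ∃ F χ : κ → κ → ι → X → unitInterval, (∀ k k' i, IsKoopmanLimit μ τ 𝒰 (F k k' i) (χ k k' i)) ∧
      ∀ᵐ x ∂μ, ∀ c : κ → ℝ, (∑ k, c k * ∏ i ∈ s, (φ i (R k x) : ℝ)) ^ 2
        ≤ ∑ k, ∑ k', c k * c k' * ∏ i ∈ s, (χ k k' i x : ℝ) := by
  let F : κ → κ → ι → X → unitInterval := fun k k' i x => f i (R k x) * f i (R k' x)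
  have hF : ∀ k k' i, Measurable (F k k' i) := fun k k' i =>
    ((h i).measurable.comp (hR k).measurable).mul ((h i).measurable.comp (hR k').measurable)
  choose χ hχ using fun k k' i => exists_isKoopmanLimit (μ := μ) hτ 𝒰 (hF k k' i)
  refine ⟨F, χ, hχ, ?_⟩
  have hpsd : ∀ᵐ x ∂μ, ∀ i ∈ s, (Matrix.of fun k k' =>
      (χ k k' i x - φ i (R k x) * φ i (R k' x) : ℝ)).PosSemidef := by
    refine (eventually_all_finset s).2 fun i _ => ?_
    have hRi := fun k => (h i).comp_commute (hR k) (hcomm k)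
    refine TendstoWeakly.ae_posSemidef_covariance (fun k => (hRi k).tendstoWeakly)
      (fun k => memLp_unitInterval (hRi k).measurable_limit ⊤) fun k k' => ?_
    exact (hχ k k' i).tendstoWeakly
  filter_upwards [hpsd] with x hx c
  exact sq_sum_mul_prod_le (A := fun i => Matrix.of fun k k' => (χ k k' i x : ℝ))
    (a := fun i k => (φ i (R k x) : ℝ)) s hx c

/-- The σ-algebra generated by all limits `φ` of sequences `f ∘ τⁿ`, where `f` ranges over the
measurable functions with values in `[0, 1]`. This is the factor in Parreau's theorem. -/
abbrev limitAlgebra (μ : Measure X) (τ : X → X) (l : Filter ℕ) : MeasurableSpace X :=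
  ⨆ φ ∈ {φ : X → unitInterval | ∃ f, IsKoopmanLimit μ τ l f φ},
    MeasurableSpace.comap φ inferInstance

lemma IsKoopmanLimit.measurable_limitAlgebra {f φ : X → unitInterval}
    (h : IsKoopmanLimit μ τ l f φ) : Measurable[limitAlgebra μ τ l] φ :=
  measurable_iff_comap_le.2
    (le_iSup₂_of_le (f := fun φ _ => MeasurableSpace.comap φ inferInstance) φ ⟨f, h⟩ le_rfl)

lemma limitAlgebra_le
    (h : ∀ f φ : X → unitInterval, IsKoopmanLimit μ τ l f φ → Measurable[m'] φ) :
    limitAlgebra μ τ l ≤ m' :=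
  iSup₂_le fun φ ⟨f, hφ⟩ => measurable_iff_comap_le.1 (h f φ hφ)

lemma limitAlgebra_le_self : limitAlgebra μ τ l ≤ mX :=
  limitAlgebra_le fun _ _ h => h.measurable_limit

lemma commute_symm (T : X ≃ᵐ X) : Function.Commute T T.symm := fun x => by
  rw [T.apply_symm_apply, T.symm_apply_apply]

lemma measurable_limitAlgebra_of_commute {R : X → X} (hR : MeasurePreserving R μ μ)
    (hcomm : Function.Commute R τ) :
    Measurable[limitAlgebra μ τ l, limitAlgebra μ τ l] R := by
  refine measurable_iff_le_map.2 (limitAlgebra_le fun f φ h => ?_)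
  exact fun s hs => (h.comp_commute hR hcomm).measurable_limitAlgebra hs

end KoopmanLimits

section Mixing

variable {W : Type*} [MeasurableSpace W] {σ : Measure W} {S : W → W}

/-- The indicator function of `B` minus its mean; mixing makes its autocorrelations vanish at
infinity. -/
noncomputable def centeredIndicator (σ : Measure W) (B : Set W) (w : W) : ℝ :=
  B.indicator 1 w - σ.real B

lemma measurable_centeredIndicator {B : Set W} (hB : MeasurableSet B) :
    Measurable (centeredIndicator σ B) :=
  (measurable_one.indicator hB).sub_const _

lemma memLp_centeredIndicator [IsFiniteMeasure σ] {B : Set W} (hB : MeasurableSet B)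
    (p : ENNReal) : MemLp (centeredIndicator σ B) p σ :=
  ((memLp_const (1 : ℝ)).indicator hB).sub (memLp_const _)

lemma integral_iterate_mul_iterate (hS : MeasurePreserving S σ σ) {g : W → ℝ} (hg : Measurable g)
    (n m : ℕ) : ∫ w, g (S^[n] w) * g (S^[m] w) ∂σ = ∫ w, g (S^[Nat.dist n m] w) * g w ∂σ := by
  wlog hmn : m ≤ n generalizing n m
  · rw [Nat.dist_comm, ← this m n (le_of_not_ge hmn)]
    simp only [mul_comm]
  obtain ⟨d, rfl⟩ := Nat.exists_eq_add_of_le' hmn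
  have hmeas : Measurable fun w => g (S^[d] w) * g w :=
    (hg.comp (hS.measurable.iterate d)).mul hg
  have hdist : Nat.dist (d + m) m = d := by rw [Nat.dist_eq_sub_of_le_right hmn, Nat.add_sub_cancel]
  calc ∫ w, g (S^[d + m] w) * g (S^[m] w) ∂σ
      = ∫ w, g (S^[d] (S^[m] w)) * g (S^[m] w) ∂σ := by simp only [Function.iterate_add_apply]
    _ = ∫ w, g (S^[d] w) * g w ∂σ := by
        conv_rhs => rw [← (hS.iterate m).map_eq]
        rw [integral_map (hS.iterate m).aemeasurable hmeas.aestronglyMeasurable]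
    _ = ∫ w, g (S^[Nat.dist (d + m) m] w) * g w ∂σ := by rw [hdist]

lemma MixingMap.tendsto_integral_centeredIndicator_mul [IsProbabilityMeasure σ]
    (hS : MeasurePreserving S σ σ) (hmix : MixingMap S σ) {B : Set W} (hB : MeasurableSet B) :
    Tendsto (fun j => ∫ w, centeredIndicator σ B (S^[j] w) * centeredIndicator σ B w ∂σ)
      atTop (𝓝 0) := by
  have hcorr : ∀ j, ∫ w, centeredIndicator σ B (S^[j] w) * centeredIndicator σ B w ∂σ
      = σ.real (S^[j] ⁻¹' B ∩ B) - σ.real B * σ.real B := fun j => by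
    have hj : MeasurableSet (S^[j] ⁻¹' B) := hS.measurable.iterate j hB
    have hmean : σ.real (S^[j] ⁻¹' B) = σ.real B :=
      (hS.iterate j).measureReal_preimage hB.nullMeasurableSet
    have hmem : ∀ {A : Set W}, MeasurableSet A → MemLp (A.indicator (1 : W → ℝ)) 2 σ :=
      fun hA => (memLp_const (1 : ℝ)).indicator hA
    calc ∫ w, centeredIndicator σ B (S^[j] w) * centeredIndicator σ B w ∂σ
        = ProbabilityTheory.covariance ((S^[j] ⁻¹' B).indicator 1) (B.indicator 1) σ := by
          rw [ProbabilityTheory.covariance, integral_indicator_one hj, integral_indicator_one hB,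
            hmean]
          rfl
      _ = σ.real (S^[j] ⁻¹' B ∩ B) - σ.real B * σ.real B := by
          rw [ProbabilityTheory.covariance_eq_sub (hmem hj) (hmem hB), ← Set.inter_indicator_one,
            integral_indicator_one (hj.inter hB), integral_indicator_one hj,
            integral_indicator_one hB, hmean]
  have hlim : Tendsto (fun j => σ.real (S^[j] ⁻¹' B ∩ B)) atTop (𝓝 (σ.real B * σ.real B)) := by
    simpa only [measureReal_def, ENNReal.toReal_mul, Function.comp_def] using
      (ENNReal.tendsto_toReal (by finiteness)).comp (hmix B B hB hB)
  simpa only [hcorr, sub_self] using hlim.sub_const (σ.real B * σ.real B)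

end Mixing

section Independence

lemma integral_mul_eq_of_forall_setIntegral_eq {Z : Type*} {m m₀ : MeasurableSpace Z}
    {ρ : Measure Z} [IsFiniteMeasure ρ] (hm : m ≤ m₀) {F g : Z → ℝ} {c : ℝ}
    (hF : Integrable F ρ) (hg : StronglyMeasurable[m] g) (hgF : Integrable (g * F) ρ)
    (h : ∀ s, MeasurableSet[m] s → ∫ z in s, F z ∂ρ = ρ.real s * c) :
    ∫ z, g z * F z ∂ρ = (∫ z, g z ∂ρ) * c := by
  have hcond : (fun _ => c) =ᵐ[ρ] ρ[F|m] :=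
    ae_eq_condExp_of_forall_setIntegral_eq hm hF (fun s _ _ => integrableOn_const)
      (fun s hs _ => by rw [setIntegral_const, smul_eq_mul, h s hs])
      aestronglyMeasurable_const
  calc ∫ z, g z * F z ∂ρ = ∫ z, (ρ[g * F|m]) z ∂ρ := (integral_condExp hm).symm
    _ = ∫ z, g z * c ∂ρ := by
        refine integral_congr_ae ?_
        filter_upwards [condExp_mul_of_stronglyMeasurable_left hg hgF hF, hcond] with z hz hc
        rw [hz, Pi.mul_apply, ← hc]
    _ = (∫ z, g z ∂ρ) * c := integral_mul_const c g

variable {ι κ Y W : Type*} [MeasurableSpace Y] [MeasurableSpace W] {ν : Measure Y} {σ : Measure W}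
  {ρ : Measure (Y × W)} {τ : Y → Y} {l : Filter ℕ} {s : Finset ι}

/-- Under `ρ`, each product over `s` of limits of sequences `fᵢ ∘ τⁿ` in the first coordinate is
uncorrelated with every event of the second coordinate. -/
def LimitProductsUncorrelated (ρ : Measure (Y × W)) (ν : Measure Y) (τ : Y → Y) (l : Filter ℕ)
    (s : Finset ι) : Prop :=
  ∀ f φ : ι → Y → unitInterval, (∀ i, IsKoopmanLimit ν τ l (f i) (φ i)) →
    ∀ B : Set W, MeasurableSet B →
      ∫ p in Prod.snd ⁻¹' B, ∏ i ∈ s, (φ i p.1 : ℝ) ∂ρ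
        = ρ.real (Prod.snd ⁻¹' B) * ∫ p, ∏ i ∈ s, (φ i p.1 : ℝ) ∂ρ

lemma limitProductsUncorrelated_empty [IsProbabilityMeasure ρ] :
    LimitProductsUncorrelated ρ ν τ l (∅ : Finset ι) := by
  intro f φ _ B _
  simp

lemma LimitProductsUncorrelated.integral_mul_prod [IsFiniteMeasure ρ]
    (hind : LimitProductsUncorrelated ρ ν τ l s) {f φ : ι → Y → unitInterval}
    (h : ∀ i, IsKoopmanLimit ν τ l (f i) (φ i)) {g : W → ℝ} (hg : Measurable g)
    (hgb : MemLp (fun p : Y × W => g p.2) ⊤ ρ) :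
    ∫ p, g p.2 * ∏ i ∈ s, (φ i p.1 : ℝ) ∂ρ
      = (∫ p, g p.2 ∂ρ) * ∫ p, ∏ i ∈ s, (φ i p.1 : ℝ) ∂ρ := by
  have hprod : MemLp (fun p : Y × W => ∏ i ∈ s, (φ i p.1 : ℝ)) ⊤ ρ :=
    memLp_prod_unitInterval s (fun i _ => (h i).measurable_limit.comp measurable_fst) ⊤
  refine integral_mul_eq_of_forall_setIntegral_eq
    (m := MeasurableSpace.comap Prod.snd inferInstance) measurable_snd.comap_le
    (hprod.integrable le_top) (hg.comp (comap_measurable _)).stronglyMeasurable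
    ((hprod.mul hgb).integrable le_top) ?_
  rintro _ ⟨B, hB, rfl⟩
  exact hind f φ h B hB

lemma LimitProductsUncorrelated.integral_sq_sum_le [IsProbabilityMeasure ρ] [Fintype κ]
    {𝒰 : Ultrafilter ℕ} (hind : LimitProductsUncorrelated ρ ν τ 𝒰 s) (hτ : Measurable τ)
    (hfst : MeasurePreserving Prod.fst ρ ν) (hsnd : MeasurePreserving Prod.snd ρ σ)
    {f φ : ι → Y → unitInterval} (h : ∀ i, IsKoopmanLimit ν τ 𝒰 (f i) (φ i))
    {R : κ → Y → Y} (hR : ∀ k, MeasurePreserving (R k) ν ν)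
    (hcomm : ∀ k, Function.Commute (R k) τ)
    {G : κ → W → ℝ} (hG : ∀ k, Measurable (G k)) (hGb : ∀ k, MemLp (G k) ⊤ σ) :
    ∫ p, (∑ k, G k p.2 * ∏ i ∈ s, (φ i (R k p.1) : ℝ)) ^ 2 ∂ρ
      ≤ ∑ k, ∑ k', |∫ w, G k w * G k' w ∂σ| := by
  have : IsProbabilityMeasure ν := hfst.map_eq ▸ Measure.isProbabilityMeasure_map hfst.aemeasurable
  obtain ⟨F, χ, hχ, hle⟩ := exists_isKoopmanLimit_ae_sq_sum_le h hτ hR hcomm s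
  have hGG : ∀ k k', MemLp (fun p : Y × W => G k p.2 * G k' p.2) ⊤ ρ := fun k k' =>
    ((hGb k').mul (hGb k)).comp_measurePreserving hsnd
  have hχ₁ : ∀ k k' i, Measurable fun p : Y × W => χ k k' i p.1 := fun k k' i =>
    (hχ k k' i).measurable_limit.comp measurable_fst
  have hχb : ∀ k k', MemLp (fun p : Y × W => ∏ i ∈ s, (χ k k' i p.1 : ℝ)) ⊤ ρ := fun k k' =>
    memLp_prod_unitInterval s (fun i _ => hχ₁ k k' i) ⊤
  have hint : ∀ k k', Integrable
      (fun p : Y × W => G k p.2 * G k' p.2 * ∏ i ∈ s, (χ k k' i p.1 : ℝ)) ρ := fun k k' =>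
    ((hχb k k').mul (hGG k k')).integrable le_top
  calc ∫ p, (∑ k, G k p.2 * ∏ i ∈ s, (φ i (R k p.1) : ℝ)) ^ 2 ∂ρ
      ≤ ∫ p, ∑ k, ∑ k', G k p.2 * G k' p.2 * ∏ i ∈ s, (χ k k' i p.1 : ℝ) ∂ρ := by
        refine integral_mono_of_nonneg (ae_of_all _ fun p => sq_nonneg _)
          (integrable_finsetSum _ fun k _ => integrable_finsetSum _ fun k' _ => hint k k') ?_
        filter_upwards [hfst.quasiMeasurePreserving.ae hle] with p hp
        exact hp fun k => G k p.2
    _ = ∑ k, ∑ k', (∫ w, G k w * G k' w ∂σ) * ∫ p, ∏ i ∈ s, (χ k k' i p.1 : ℝ) ∂ρ := by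
        rw [integral_finsetSum _ fun k _ => integrable_finsetSum _ fun k' _ => hint k k']
        refine Finset.sum_congr rfl fun k _ => ?_
        rw [integral_finsetSum _ fun k' _ => hint k k']
        refine Finset.sum_congr rfl fun k' _ => ?_
        have hmeas : Measurable fun w => G k w * G k' w := (hG k).mul (hG k')
        rw [hind.integral_mul_prod (g := fun w => G k w * G k' w) (hχ k k') hmeas (hGG k k'),
          ← hsnd.map_eq, integral_map hsnd.aemeasurable hmeas.aestronglyMeasurable]
    _ ≤ ∑ k, ∑ k', |∫ w, G k w * G k' w ∂σ| := by
        refine Finset.sum_le_sum fun k _ => Finset.sum_le_sum fun k' _ => ?_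
        refine (le_abs_self _).trans ?_
        rw [abs_mul]
        refine mul_le_of_le_one_right (abs_nonneg _) ?_
        obtain ⟨h₀, h₁⟩ := integral_prod_unitInterval_mem_Icc (μ := ρ) s
          fun i _ => hχ₁ k k' i
        rwa [abs_of_nonneg h₀]

lemma sq_integral_mul_unitInterval_le {Z : Type*} [MeasurableSpace Z] {ρ : Measure Z}
    [IsProbabilityMeasure ρ] {V : Z → ℝ} (hV : MemLp V 2 ρ) {f : Z → unitInterval}
    (hf : Measurable f) : (∫ z, V z * f z ∂ρ) ^ 2 ≤ ∫ z, V z ^ 2 ∂ρ := by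
  have hVf : MemLp (fun z => V z * f z) 2 ρ := (memLp_unitInterval hf ⊤).mul hV
  have hvar := ProbabilityTheory.variance_nonneg (fun z => V z * f z) ρ
  rw [ProbabilityTheory.variance_eq_sub hVf, sub_nonneg] at hvar
  refine hvar.trans (integral_mono hVf.integrable_sq hV.integrable_sq fun z => ?_)
  simp only [Pi.pow_apply, mul_pow]
  exact mul_le_of_le_one_right (sq_nonneg _) (pow_le_one₀ (f z).2.1 (f z).2.2)

lemma integral_centeredIndicator_mul {F : Y × W → ℝ} (hF : Integrable F ρ)
    (hsnd : MeasurePreserving Prod.snd ρ σ) {B : Set W} (hB : MeasurableSet B) :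
    ∫ p, centeredIndicator σ B p.2 * F p ∂ρ
      = ∫ p in Prod.snd ⁻¹' B, F p ∂ρ - ρ.real (Prod.snd ⁻¹' B) * ∫ p, F p ∂ρ := by
  have hB' : MeasurableSet (Prod.snd ⁻¹' B : Set (Y × W)) := measurable_snd hB
  rw [hsnd.measureReal_preimage hB.nullMeasurableSet, ← integral_indicator hB',
    ← integral_const_mul, ← integral_sub (hF.indicator hB') (hF.const_mul _)]
  refine integral_congr_ae (ae_of_all _ fun p => ?_)
  by_cases hp : p.2 ∈ B <;> simp [centeredIndicator, hp, sub_mul]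

variable {T : Y ≃ᵐ Y} {S : W → W} {𝒰 : Ultrafilter ℕ} [IsProbabilityMeasure ρ]

lemma LimitProductsUncorrelated.tendsto_integral_orbit
    (hind : LimitProductsUncorrelated ρ ν T.symm 𝒰 s)
    (hfst : MeasurePreserving Prod.fst ρ ν) (hsnd : MeasurePreserving Prod.snd ρ σ)
    (hT : MeasurePreserving T ν ν) (hS : MeasurePreserving S σ σ) (hmix : MixingMap S σ)
    {f φ : ι → Y → unitInterval} (h : ∀ i, IsKoopmanLimit ν T.symm 𝒰 (f i) (φ i))
    {B : Set W} (hB : MeasurableSet B) {f₀ : Y → unitInterval} (hf₀ : Measurable f₀) :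
    Tendsto (fun n => ∫ p, centeredIndicator σ B (S^[n] p.2)
      * (∏ i ∈ s, (φ i (T^[n] p.1) : ℝ)) * f₀ p.1 ∂ρ) atTop (𝓝 0) := by
  have : IsProbabilityMeasure σ := hsnd.map_eq ▸ Measure.isProbabilityMeasure_map hsnd.aemeasurable
  set V : ℕ → Y × W → ℝ := fun n p =>
    centeredIndicator σ B (S^[n] p.2) * ∏ i ∈ s, (φ i (T^[n] p.1) : ℝ)
  have hVmem : ∀ n, MemLp (V n) 2 ρ := fun n => by
    have hG := (memLp_centeredIndicator (σ := σ) hB ⊤).comp_measurePreserving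
      ((hS.iterate n).comp hsnd)
    exact (memLp_prod_unitInterval s (fun i _ => (h i).measurable_limit.comp
      ((hT.measurable.iterate n).comp measurable_fst)) 2).mul hG
  have hcorr := (hmix.tendsto_integral_centeredIndicator_mul hS hB).abs
  rw [abs_zero] at hcorr
  refine tendsto_zero_of_sq_sum_le hcorr fun J => ?_
  calc (∑ n ∈ J, ∫ p, V n p * f₀ p.1 ∂ρ) ^ 2
      = (∫ p, (∑ n ∈ J, V n p) * f₀ p.1 ∂ρ) ^ 2 := by
        simp only [Finset.sum_mul]
        rw [integral_finsetSum]
        exact fun n _ => (hVmem n).integrable_mul (memLp_unitInterval (hf₀.comp measurable_fst) 2)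
    _ ≤ ∫ p, (∑ n ∈ J, V n p) ^ 2 ∂ρ :=
        sq_integral_mul_unitInterval_le (memLp_finsetSum J fun n _ => hVmem n)
          (hf₀.comp measurable_fst)
    _ = ∫ p, (∑ n : J, V n p) ^ 2 ∂ρ := by
        simp only [fun p => Finset.sum_coe_sort J fun n => V n p]
    _ ≤ ∑ n : J, ∑ m : J, |∫ w, centeredIndicator σ B (S^[n] w)
          * centeredIndicator σ B (S^[m] w) ∂σ| :=
        hind.integral_sq_sum_le (R := fun n : J => T^[n])
          (G := fun (n : J) w => centeredIndicator σ B (S^[n] w)) T.symm.measurable hfst hsnd h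
          (fun n => hT.iterate n)
          (fun n => (commute_symm T).iterate_left n)
          (fun n => (measurable_centeredIndicator hB).comp (hS.measurable.iterate n))
          fun n => (memLp_centeredIndicator hB ⊤).comp_measurePreserving (hS.iterate n)
    _ = ∑ n ∈ J, ∑ m ∈ J, |∫ w, centeredIndicator σ B (S^[Nat.dist n m] w)
          * centeredIndicator σ B w ∂σ| := by
        simp only [integral_iterate_mul_iterate hS (measurable_centeredIndicator hB),
          ← Finset.sum_coe_sort J]

lemma LimitProductsUncorrelated.insert [DecidableEq ι]
    (hind : LimitProductsUncorrelated ρ ν T.symm 𝒰 s) (h𝒰 : (𝒰 : Filter ℕ) ≤ atTop)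
    (hfst : MeasurePreserving Prod.fst ρ ν) (hsnd : MeasurePreserving Prod.snd ρ σ)
    (hT : MeasurePreserving T ν ν) (hS : MeasurePreserving S σ σ) (hmix : MixingMap S σ)
    (hρ : MeasurePreserving (Prod.map T S) ρ ρ) {j : ι} (hj : j ∉ s) :
    LimitProductsUncorrelated ρ ν T.symm 𝒰 (insert j s) := by
  intro f φ h B hB
  have : IsProbabilityMeasure σ := hsnd.map_eq ▸ Measure.isProbabilityMeasure_map hsnd.aemeasurable
  have hφ : ∀ i, Measurable fun p : Y × W => φ i p.1 := fun i =>
    (h i).measurable_limit.comp measurable_fst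
  set V : Y × W → ℝ := fun p => centeredIndicator σ B p.2 * ∏ i ∈ s, (φ i p.1 : ℝ)
  have hV : Measurable V := ((measurable_centeredIndicator hB).comp measurable_snd).mul
    (Finset.measurable_fun_prod s fun i _ => (hφ i).subtype_val)
  have hVmem : MemLp V 2 ρ := (memLp_prod_unitInterval s (fun i _ => hφ i) 2).mul
    ((memLp_centeredIndicator hB ⊤).comp_measurePreserving hsnd)
  have hshift : ∀ n, ∫ p, V (T^[n] p.1, S^[n] p.2) * f j p.1 ∂ρ
      = ∫ p, V p * f j (T.symm^[n] p.1) ∂ρ := fun n => by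
    have hmeas : Measurable fun p : Y × W => V p * (f j (T.symm^[n] p.1) : ℝ) := hV.mul
      ((h j).measurable.comp ((T.symm.measurable.iterate n).comp measurable_fst)).subtype_val
    conv_rhs => rw [← (hρ.iterate n).map_eq]
    rw [integral_map (hρ.iterate n).aemeasurable hmeas.aestronglyMeasurable, Prod.map_iterate]
    simp only [Prod.map, (Function.LeftInverse.iterate T.symm_apply_apply n) _]
  have hzero := (hind.tendsto_integral_orbit hfst hsnd hT hS hmix h hB (h j).measurable).mono_left
    h𝒰
  have hlim := ((h j).tendstoWeakly.comp_measurePreserving hfst).tendsto_integral_mul V hVmem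
  have hVφ : ∫ p, V p * φ j p.1 ∂ρ = 0 :=
    tendsto_nhds_unique hlim (hzero.congr hshift)
  rw [← sub_eq_zero, ← integral_centeredIndicator_mul
    ((memLp_prod_unitInterval _ (fun i _ => hφ i) 1).integrable le_rfl) hsnd hB, ← hVφ]
  simp only [Finset.prod_insert hj, V, mul_assoc, mul_comm (φ j _ : ℝ)]

theorem limitProductsUncorrelated (h𝒰 : (𝒰 : Filter ℕ) ≤ atTop)
    (hfst : MeasurePreserving Prod.fst ρ ν) (hsnd : MeasurePreserving Prod.snd ρ σ)
    (hT : MeasurePreserving T ν ν) (hS : MeasurePreserving S σ σ) (hmix : MixingMap S σ)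
    (hρ : MeasurePreserving (Prod.map T S) ρ ρ) (s : Finset ι) :
    LimitProductsUncorrelated ρ ν T.symm 𝒰 s := by
  classical
  induction s using Finset.induction_on with
  | empty => exact limitProductsUncorrelated_empty
  | insert j s hj hind => exact hind.insert h𝒰 hfst hsnd hT hS hmix hρ hj

end Independence

section MeasureExt

lemma measure_ext_of_forall_integral_monomial {κ : Type*} [Fintype κ]
    {P P' : Measure (κ → unitInterval)} [IsFiniteMeasure P] [IsFiniteMeasure P']
    (h : ∀ e : κ → ℕ, ∫ z, ∏ k, (z k : ℝ) ^ e k ∂P = ∫ z, ∏ k, (z k : ℝ) ^ e k ∂P') :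
    P = P' := by
  let coord : κ → BoundedContinuousFunction (κ → unitInterval) ℝ := fun k =>
    .mkOfCompact ⟨fun z => (z k : ℝ), by fun_prop⟩
  let A : StarSubalgebra ℝ (BoundedContinuousFunction (κ → unitInterval) ℝ) :=
    { (MvPolynomial.aeval coord).range with
      star_mem' := fun {g} hg => by
        rwa [show star g = g from BoundedContinuousFunction.ext fun _ => star_trivial _] }
  refine ext_of_forall_mem_subalgebra_integral_eq_of_polish (𝕜 := ℝ) (A := A) ?_ ?_
  · intro z z' hne
    obtain ⟨k, hk⟩ := Function.ne_iff.1 hne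
    exact ⟨_, ⟨_, ⟨coord k, ⟨MvPolynomial.X k, MvPolynomial.aeval_X coord k⟩, rfl⟩, rfl⟩,
      fun heq => hk (Subtype.ext heq)⟩
  · rintro _ ⟨p, rfl⟩
    have heval : ∀ z, MvPolynomial.aeval coord p z
        = ∑ d ∈ p.support, p.coeff d * ∏ k, (z k : ℝ) ^ d k := fun z => by
      simp [MvPolynomial.aeval_def, MvPolynomial.eval₂_eq', coord,
        BoundedContinuousFunction.sum_apply]
    have hint : ∀ (Q : Measure (κ → unitInterval)) [IsFiniteMeasure Q], ∀ d ∈ p.support,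
        Integrable (fun z => p.coeff d * ∏ k, (z k : ℝ) ^ d k) Q := fun Q _ d _ => by
      refine .const_mul (Continuous.integrable_of_hasCompactSupport ?_ (.of_compactSpace _)) _
      fun_prop
    simp only [AlgHom.toRingHom_eq_coe, RingHom.coe_coe, heval]
    rw [integral_finsetSum _ (hint P), integral_finsetSum _ (hint P')]
    simp only [integral_const_mul, h]

lemma measure_ext_of_forall_integral_prod_pow {X : Type*} {mX : MeasurableSpace X}
    {ν ν' : Measure X} [IsFiniteMeasure ν] [IsFiniteMeasure ν'] {𝓜 : Set (X → unitInterval)}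
    (hgen : mX = ⨆ φ ∈ 𝓜, MeasurableSpace.comap φ inferInstance)
    (h : ∀ s : Finset (X → unitInterval), ↑s ⊆ 𝓜 → ∀ e : s → ℕ,
      ∫ x, ∏ φ : s, (φ.1 x : ℝ) ^ e φ ∂ν = ∫ x, ∏ φ : s, (φ.1 x : ℝ) ^ e φ ∂ν') :
    ν = ν' := by
  let Θ : ∀ s : Finset (X → unitInterval), X → s → unitInterval := fun s x φ => φ.1 x
  have hΘ : ∀ s : Finset (X → unitInterval), ↑s ⊆ 𝓜 → Measurable (Θ s) := fun s hs =>
    measurable_pi_iff.2 fun φ => by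
      rw [measurable_iff_comap_le, hgen]
      exact le_iSup₂_of_le φ.1 (hs φ.2) le_rfl
  have hmap : ∀ s : Finset (X → unitInterval), ↑s ⊆ 𝓜 → ν.map (Θ s) = ν'.map (Θ s) :=
    fun s hs => measure_ext_of_forall_integral_monomial fun e => by
      have hmon : Measurable fun z : s → unitInterval => ∏ φ, (z φ : ℝ) ^ e φ := by fun_prop
      rw [integral_map (hΘ s hs).aemeasurable hmon.aestronglyMeasurable,
        integral_map (hΘ s hs).aemeasurable hmon.aestronglyMeasurable]
      exact h s hs e
  have hpreimage : ∀ s : Finset (X → unitInterval), ↑s ⊆ 𝓜 → ∀ E, MeasurableSet E →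
      ν (Θ s ⁻¹' E) = ν' (Θ s ⁻¹' E) := fun s hs E hE => by
    rw [← Measure.map_apply (hΘ s hs) hE, hmap s hs, Measure.map_apply (hΘ s hs) hE]
  refine ext_of_generate_finite _
    (hgen.trans (generateFrom_piiUnionInter_measurableSet _ 𝓜).symm)
    (isPiSystem_piiUnionInter _
      (fun φ => @MeasurableSpace.isPiSystem_measurableSet X (.comap φ inferInstance)) 𝓜) ?_
    (hpreimage ∅ (by simp) Set.univ .univ)
  rintro _ ⟨s, hs, E, hE, rfl⟩
  choose D hD hDE using hE
  have hcyl : ⋂ φ ∈ s, E φ = Θ s ⁻¹' ⋂ φ : s, Function.eval φ ⁻¹' D φ.1 φ.2 := by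
    simp only [Set.preimage_iInter, ← Set.preimage_comp, Set.iInter_subtype]
    exact Set.iInter₂_congr fun φ hφ => (hDE φ hφ).symm
  rw [hcyl]
  exact hpreimage s hs _ (.iInter fun φ => measurable_pi_apply φ (hD φ.1 φ.2))

end MeasureExt

section Factors

lemma integral_mul_comp_symm_iterate {X : Type*} [MeasurableSpace X] {μ : Measure X} {T : X ≃ᵐ X}
    (hT : MeasurePreserving T μ μ) {u f : X → ℝ} (hu : AEStronglyMeasurable u μ)
    (hf : Measurable f) (n : ℕ) :
    ∫ x, u x * f (T.symm^[n] x) ∂μ = ∫ x, u (T^[n] x) * f x ∂μ := by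
  have hmeas : AEStronglyMeasurable (fun x => u x * f (T.symm^[n] x)) (μ.map T^[n]) := by
    rw [(hT.iterate n).map_eq]
    exact hu.mul (hf.comp (T.symm.measurable.iterate n)).aestronglyMeasurable
  conv_lhs => rw [← (hT.iterate n).map_eq, integral_map (hT.iterate n).aemeasurable hmeas]
  simp only [(Function.LeftInverse.iterate T.symm_apply_apply n) _]

variable {X Y : Type*} {m mX : MeasurableSpace X} {mY : MeasurableSpace Y} {μ : Measure X}
  {ν : Measure Y} {l : Filter ℕ}

/- The function `g` is the conditional expectation of `f` given `π`. -/
lemma exists_unitInterval_forall_integral_mul_comp_eq [IsFiniteMeasure μ] {π : X → Y}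
    (hπ : MeasurePreserving π μ ν) {f : X → unitInterval} (hf : Measurable f) :
    ∃ g : Y → unitInterval, Measurable g ∧
      ∀ h : Y → ℝ, MemLp h 2 ν → ∫ x, h (π x) * f x ∂μ = ∫ y, h y * g y ∂ν := by
  have : IsFiniteMeasure ν := hπ.map_eq ▸ inferInstance
  obtain ⟨v, hv, hfv⟩ := exists_memLp_forall_integral_mul_comp_eq hπ (memLp_unitInterval hf 2)
  have hset : ∀ s, MeasurableSet s →
      ∫ y in s, v y ∂ν = ∫ x in π ⁻¹' s, (f x : ℝ) ∂μ := fun s hs => by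
    have heq := hfv (s.indicator 1) ((memLp_const (1 : ℝ)).indicator hs)
    rw [← integral_indicator hs, ← integral_indicator (hπ.measurable hs)]
    convert heq.symm using 2
    · ext y
      by_cases hy : y ∈ s <;> simp [hy]
    · ext x
      by_cases hx : π x ∈ s <;> simp [hx]
  have hv₀ : ∀ᵐ y ∂ν, 0 ≤ v y :=
    ae_nonneg_of_forall_setIntegral_nonneg (hv.integrable one_le_two) fun s hs _ => by
      rw [hset s hs]
      exact integral_nonneg fun x => (f x).2.1
  have hv₁ : ∀ᵐ y ∂ν, v y ≤ 1 :=
    ae_le_of_forall_setIntegral_le (hv.integrable one_le_two) (integrable_const 1) fun s hs _ => by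
      rw [hset s hs, setIntegral_const, ← hπ.measureReal_preimage hs.nullMeasurableSet,
        ← setIntegral_const]
      exact integral_mono ((memLp_unitInterval hf 1).integrable le_rfl).integrableOn
        integrableOn_const fun x => (f x).2.2
  have hmk := hv.1.ae_eq_mk
  obtain ⟨g, hg, hgv⟩ := exists_measurable_unitInterval_ae_eq (μ := ν)
    hv.1.stronglyMeasurable_mk.measurable
    (by filter_upwards [hv₀, hmk] with y hy h using h ▸ hy)
    (by filter_upwards [hv₁, hmk] with y hy h using h ▸ hy)
  refine ⟨g, hg, fun h hh => ?_⟩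
  simp only [mul_comm (h _)]
  rw [hfv h hh]
  exact integral_congr_ae ((hmk.trans hgv).mono fun y hy => congrArg (· * h y) hy)

lemma IsKoopmanLimit.exists_of_comp [IsFiniteMeasure μ] {T : X ≃ᵐ X} {T' : Y ≃ᵐ Y}
    (hT : MeasurePreserving T μ μ) (hT' : MeasurePreserving T' ν ν) {π : X → Y}
    (hπ : MeasurePreserving π μ ν) (hsemi : Function.Semiconj π T T') {f : X → unitInterval}
    {φ : Y → unitInterval} (hφ : Measurable φ) (h : IsKoopmanLimit μ T.symm l f (φ ∘ π)) :
    ∃ g, IsKoopmanLimit ν T'.symm l g φ := by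
  have : IsFiniteMeasure ν := hπ.map_eq ▸ inferInstance
  obtain ⟨g, hg, hfg⟩ := exists_unitInterval_forall_integral_mul_comp_eq hπ h.measurable
  refine ⟨g, hg, hφ, fun n => memLp_unitInterval (hg.comp (T'.symm.measurable.iterate n)) 2,
    memLp_unitInterval hφ 2, fun u hu => ?_⟩
  have huπ := hu.comp_measurePreserving hπ
  have hlimit : ∫ x, (u ∘ π) x * φ (π x) ∂μ = ∫ y, u y * φ y ∂ν := by
    rw [← hπ.map_eq, integral_map hπ.aemeasurable]
    · rfl
    · rw [hπ.map_eq]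
      exact hu.1.mul hφ.subtype_val.aestronglyMeasurable
  rw [← hlimit]
  refine (h.tendstoWeakly.tendsto_integral_mul (u ∘ π) huπ).congr fun n => ?_
  calc ∫ x, (u ∘ π) x * f (T.symm^[n] x) ∂μ
      = ∫ x, u (π (T^[n] x)) * f x ∂μ :=
        integral_mul_comp_symm_iterate hT huπ.1 h.measurable.subtype_val n
    _ = ∫ x, (u ∘ T'^[n]) (π x) * f x ∂μ := by
        simp only [(hsemi.iterate_right n).eq, Function.comp_apply]
    _ = ∫ y, (u ∘ T'^[n]) y * g y ∂ν := hfg _ (hu.comp_measurePreserving (hT'.iterate n))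
    _ = ∫ y, u y * g (T'.symm^[n] y) ∂ν :=
        (integral_mul_comp_symm_iterate hT' hu.1 hg.subtype_val n).symm

lemma measurePreserving_id_trim (hm : m ≤ mX) :
    @MeasurePreserving X X mX m id μ (μ.trim hm) :=
  @MeasurePreserving.mk X X mX m id μ (μ.trim hm) (measurable_id'' hm) (trim_eq_map hm).symm

lemma measurePreserving_trim (hm : m ≤ mX) {R : X → X} (hR : MeasurePreserving R μ μ)
    (hRm : Measurable[m, m] R) : @MeasurePreserving X X m m R (μ.trim hm) (μ.trim hm) := by
  refine @MeasurePreserving.mk X X m m R (μ.trim hm) (μ.trim hm) hRm ?_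
  refine @Measure.ext X m _ _ fun s hs => ?_
  rw [@Measure.map_apply X X m m (μ.trim hm) R hRm s hs, trim_measurableSet_eq hm (hRm hs),
    trim_measurableSet_eq hm hs, hR.measure_preimage (hm s hs).nullMeasurableSet]

variable {T : X ≃ᵐ X}

/-- The automorphism of the factor `limitAlgebra μ T.symm l` given by `T`. -/
abbrev limitAlgebraEquiv (hT : MeasurePreserving T μ μ) (l : Filter ℕ) :
    @MeasurableEquiv X X (limitAlgebra μ T.symm l) (limitAlgebra μ T.symm l) :=
  @MeasurableEquiv.mk X X (limitAlgebra μ T.symm l) (limitAlgebra μ T.symm l) T.toEquiv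
    (measurable_limitAlgebra_of_commute hT (commute_symm T))
    (measurable_limitAlgebra_of_commute (hT.symm T) (.refl _))

lemma measurePreserving_limitAlgebraEquiv (hT : MeasurePreserving T μ μ) :
    @MeasurePreserving X X (limitAlgebra μ T.symm l) (limitAlgebra μ T.symm l)
      (limitAlgebraEquiv hT l) (μ.trim limitAlgebra_le_self) (μ.trim limitAlgebra_le_self) :=
  measurePreserving_trim limitAlgebra_le_self hT
    (measurable_limitAlgebra_of_commute hT (commute_symm T))

lemma limitAlgebra_le_limitAlgebra_trim [IsFiniteMeasure μ] (hT : MeasurePreserving T μ μ) :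
    limitAlgebra μ T.symm l
      ≤ @limitAlgebra X (limitAlgebra μ T.symm l) (μ.trim limitAlgebra_le_self) T.symm l := by
  refine limitAlgebra_le fun f φ h => ?_
  obtain ⟨g, hg⟩ := @IsKoopmanLimit.exists_of_comp X X mX (limitAlgebra μ T.symm l) μ
    (μ.trim limitAlgebra_le_self) l _ T (limitAlgebraEquiv hT l) hT
    (measurePreserving_limitAlgebraEquiv hT) id (measurePreserving_id_trim _) (fun _ => rfl) f φ
    h.measurable_limitAlgebra h
  exact hg.measurable_limitAlgebra

end Factors

section Joinings

variable {Y W : Type*} {mY : MeasurableSpace Y} {mW : MeasurableSpace W} {ν : Measure Y}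
  {σ : Measure W} {T : Y ≃ᵐ Y} {S : W → W} {ρ : Measure (Y × W)} {𝒰 : Ultrafilter ℕ}

namespace IsFactorJoining

lemma isProbabilityMeasure (h : IsFactorJoining mY mW ν σ T S ρ) : IsProbabilityMeasure ρ := h.1

lemma measurePreserving_fst (h : IsFactorJoining mY mW ν σ T S ρ) :
    MeasurePreserving Prod.fst ρ ν := ⟨measurable_fst, h.2.1⟩

lemma measurePreserving_snd (h : IsFactorJoining mY mW ν σ T S ρ) :
    MeasurePreserving Prod.snd ρ σ := ⟨measurable_snd, h.2.2.1⟩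

lemma measurePreserving_prodMap (h : IsFactorJoining mY mW ν σ T S ρ) (hS : Measurable S) :
    MeasurePreserving (Prod.map T S) ρ ρ := ⟨T.measurable.prodMap hS, h.2.2.2⟩

lemma setIntegral_prod_pow_eq (h : IsFactorJoining mY mW ν σ T S ρ)
    (h𝒰 : (𝒰 : Filter ℕ) ≤ atTop) (hT : MeasurePreserving T ν ν) (hS : MeasurePreserving S σ σ)
    (hmix : MixingMap S σ) {κ : Type*} [Fintype κ] {f φ : κ → Y → unitInterval}
    (hφ : ∀ k, IsKoopmanLimit ν T.symm 𝒰 (f k) (φ k)) (e : κ → ℕ) {B : Set W}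
    (hB : MeasurableSet B) :
    ∫ p in Prod.snd ⁻¹' B, ∏ k, (φ k p.1 : ℝ) ^ e k ∂ρ
      = σ.real B * ∫ y, ∏ k, (φ k y : ℝ) ^ e k ∂ν := by
  have := h.isProbabilityMeasure
  have hpow : ∀ y, ∏ k, (φ k y : ℝ) ^ e k = ∏ i : Σ k, Fin (e k), (φ i.1 y : ℝ) := fun y => by
    simp [Fintype.prod_sigma]
  have hmeas : Measurable fun y => ∏ k, (φ k y : ℝ) ^ e k :=
    Finset.measurable_fun_prod _ fun k _ => (hφ k).measurable_limit.subtype_val.pow_const _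
  have hind := limitProductsUncorrelated h𝒰 h.measurePreserving_fst h.measurePreserving_snd hT hS
    hmix (h.measurePreserving_prodMap hS.measurable) (Finset.univ : Finset (Σ k, Fin (e k)))
    (fun i => f i.1) (fun i => φ i.1) (fun i => hφ i.1) B hB
  simp only [← hpow] at hind
  rw [hind, h.measurePreserving_snd.measureReal_preimage hB.nullMeasurableSet,
    ← h.measurePreserving_fst.map_eq, integral_map measurable_fst.aemeasurable
      hmeas.aestronglyMeasurable]

lemma map_fst_restrict_eq_smul (h : IsFactorJoining mY mW ν σ T S ρ)
    (h𝒰 : (𝒰 : Filter ℕ) ≤ atTop) (hgen : mY ≤ limitAlgebra ν T.symm 𝒰)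
    (hT : MeasurePreserving T ν ν) (hS : MeasurePreserving S σ σ) (hmix : MixingMap S σ)
    {B : Set W} (hB : MeasurableSet B) :
    (ρ.restrict (Prod.snd ⁻¹' B)).map Prod.fst = σ B • ν := by
  have := h.isProbabilityMeasure
  have : IsFiniteMeasure ν := h.measurePreserving_fst.map_eq ▸ inferInstance
  have : IsFiniteMeasure σ := h.measurePreserving_snd.map_eq ▸ inferInstance
  have : IsFiniteMeasure (σ B • ν) := Measure.smul_finite ν (measure_ne_top σ B)
  refine measure_ext_of_forall_integral_prod_pow (hgen.antisymm limitAlgebra_le_self)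
    fun s hs e => ?_
  choose f hf using fun φ : s => hs φ.2
  have hmeas : Measurable fun y => ∏ φ : s, (φ.1 y : ℝ) ^ e φ :=
    Finset.measurable_fun_prod _ fun φ _ => (hf φ).measurable_limit.subtype_val.pow_const _
  rw [integral_map measurable_fst.aemeasurable hmeas.aestronglyMeasurable,
    h.setIntegral_prod_pow_eq h𝒰 hT hS hmix hf e hB, integral_smul_measure, smul_eq_mul,
    measureReal_def]

theorem eq_prod (h : IsFactorJoining mY mW ν σ T S ρ) (h𝒰 : (𝒰 : Filter ℕ) ≤ atTop)
    (hgen : mY ≤ limitAlgebra ν T.symm 𝒰) (hT : MeasurePreserving T ν ν)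
    (hS : MeasurePreserving S σ σ) (hmix : MixingMap S σ) : ρ = ν.prod σ := by
  have := h.isProbabilityMeasure
  have : IsFiniteMeasure ν := h.measurePreserving_fst.map_eq ▸ inferInstance
  have : IsFiniteMeasure σ := h.measurePreserving_snd.map_eq ▸ inferInstance
  refine (Measure.prod_eq fun A B hA hB => ?_).symm
  calc ρ (A ×ˢ B) = (ρ.restrict (Prod.snd ⁻¹' B)).map Prod.fst A := by
        rw [Measure.map_apply measurable_fst hA, Measure.restrict_apply (measurable_fst hA),
          Set.prod_eq]
    _ = ν A * σ B := by
        rw [h.map_fst_restrict_eq_smul h𝒰 hgen hT hS hmix hB, Measure.smul_apply, smul_eq_mul,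
          mul_comm]

end IsFactorJoining

end Joinings

section Nontriviality

variable {X : Type*} [MeasurableSpace X] {μ : Measure X}

lemma exists_ultrafilter_of_not_mixingMap {τ : X → X} (h : ¬ MixingMap τ μ) :
    ∃ 𝒰 : Ultrafilter ℕ, (𝒰 : Filter ℕ) ≤ atTop ∧ ∃ A B : Set X, MeasurableSet A ∧
      MeasurableSet B ∧ ¬ Tendsto (fun n => μ (τ^[n] ⁻¹' A ∩ B)) 𝒰 (𝓝 (μ A * μ B)) := by
  simp only [MixingMap, not_forall] at h
  obtain ⟨A, B, hA, hB, hAB⟩ := h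
  simp only [tendsto_iff_ultrafilter _ atTop, not_forall] at hAB
  obtain ⟨𝒰, h𝒰, hlim⟩ := hAB
  exact ⟨𝒰, h𝒰, A, B, hA, hB, hlim⟩

variable [IsProbabilityMeasure μ] {T : X ≃ᵐ X} {l : Filter ℕ}

lemma IsKoopmanLimit.tendsto_measureReal_inter (hT : MeasurePreserving T μ μ) {B : Set X}
    (hB : MeasurableSet B) {φ : X → unitInterval}
    (h : IsKoopmanLimit μ T.symm l (B.indicator 1) φ) {A : Set X} (hA : MeasurableSet A) :
    Tendsto (fun n => μ.real (T^[n] ⁻¹' A ∩ B)) l (𝓝 (∫ x in A, (φ x : ℝ) ∂μ)) := by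
  refine (h.tendstoWeakly.tendsto_setIntegral hA).congr fun n => ?_
  have hTA : MeasurableSet (T^[n] ⁻¹' A) := T.measurable.iterate n hA
  have hcoe : ∀ x, ((B.indicator 1 x : unitInterval) : ℝ) = B.indicator 1 x := fun x => by
    by_cases hx : x ∈ B <;> simp [hx]
  calc ∫ x in A, ((B.indicator 1 (T.symm^[n] x) : unitInterval) : ℝ) ∂μ
      = ∫ x, A.indicator 1 x * B.indicator 1 (T.symm^[n] x) ∂μ := by
        rw [← integral_indicator hA]
        congr with x
        by_cases hx : x ∈ A <;> simp [hx, hcoe]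
    _ = ∫ x, A.indicator 1 (T^[n] x) * B.indicator 1 x ∂μ :=
        integral_mul_comp_symm_iterate hT (measurable_one.indicator hA).aestronglyMeasurable
          (measurable_one.indicator hB) n
    _ = ∫ x, (T^[n] ⁻¹' A ∩ B).indicator 1 x ∂μ := by
        rw [Set.inter_indicator_one]
        rfl
    _ = μ.real (T^[n] ⁻¹' A ∩ B) := integral_indicator_one (hTA.inter hB)

lemma IsKoopmanLimit.not_ae_eq_const [l.NeBot] (hT : MeasurePreserving T μ μ) {A B : Set X}
    (hA : MeasurableSet A) (hB : MeasurableSet B)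
    (hAB : ¬ Tendsto (fun n => μ (T^[n] ⁻¹' A ∩ B)) l (𝓝 (μ A * μ B))) {φ : X → unitInterval}
    (h : IsKoopmanLimit μ T.symm l (B.indicator 1) φ) (c : unitInterval) :
    ¬ φ =ᵐ[μ] fun _ => c := by
  intro hc
  have hlim : ∀ A, MeasurableSet A →
      Tendsto (fun n => μ.real (T^[n] ⁻¹' A ∩ B)) l (𝓝 (μ.real A * c)) := fun A hA => by
    have hint : ∫ x in A, (φ x : ℝ) ∂μ = μ.real A * c := by
      rw [setIntegral_congr_ae (g := fun _ => (c : ℝ)) hA (hc.mono fun x hx _ => by rw [hx]),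
        setIntegral_const, smul_eq_mul]
    exact hint ▸ h.tendsto_measureReal_inter hT hB hA
  have hcB : μ.real B = c := by
    have huniv := hlim Set.univ .univ
    simp only [Set.preimage_univ, Set.univ_inter, probReal_univ, one_mul] at huniv
    exact tendsto_nhds_unique tendsto_const_nhds huniv
  refine hAB ((ENNReal.tendsto_toReal_iff (fun _ => by finiteness) (by finiteness)).1 ?_)
  rw [ENNReal.toReal_mul]
  have hlimA := hlim A hA
  rw [← hcB] at hlimA
  exact hlimA

lemma exists_preimage_measure_pos_lt_one {Z : Type*} [MeasurableSpace Z] [Nonempty Z]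
    [MeasurableSpace.CountablySeparated Z] {φ : X → Z} (hφ : Measurable φ)
    (h : ∀ c, ¬ φ =ᵐ[μ] fun _ => c) :
    ∃ E, MeasurableSet E ∧ 0 < μ (φ ⁻¹' E) ∧ μ (φ ⁻¹' E) < 1 := by
  by_contra! hcon
  obtain ⟨c, hc⟩ := exists_eventuallyEq_const_of_forall_separating (l := ae μ) (f := φ)
    MeasurableSet fun E hE => by
      rcases eq_zero_or_pos (a := μ (φ ⁻¹' E)) with hzero | hpos
      · exact .inr (measure_eq_zero_iff_ae_notMem.1 hzero)
      · exact .inl ((mem_ae_iff_prob_eq_one (hφ hE)).2 (prob_le_one.antisymm (hcon E hE hpos)))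
  exact h c hc

end Nontriviality

theorem parreau_nonmixing_factor_general.{v, w} {X : Type v} [mX : MeasurableSpace X]
    (μ : Measure X) [IsProbabilityMeasure μ] (T : X ≃ᵐ X) (hT : MeasurePreserving T μ μ)
    (hNotMix : ¬ MixingMap T μ) :
    ∃ (𝒞 : MeasurableSpace X) (h𝒞 : 𝒞 ≤ mX),
      Measurable[𝒞, 𝒞] T ∧ Measurable[𝒞, 𝒞] (@MeasurableEquiv.symm X X mX mX T) ∧
      (∃ s : Set X, MeasurableSet[𝒞] s ∧ 0 < μ s ∧ μ s < 1) ∧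
      (∀ (W : Type w) [mW : MeasurableSpace W] (σ : Measure W) (S : W → W),
        MeasurePreserving S σ σ → MixingMap S σ →
          ∀ ρ : @Measure (X × W) (𝒞.prod mW), IsFactorJoining 𝒞 mW (μ.trim h𝒞) σ T S ρ →
            ρ = @Measure.prod _ _ 𝒞 mW (μ.trim h𝒞) σ) := by
  obtain ⟨𝒰, h𝒰, A, B, hA, hB, hAB⟩ := exists_ultrafilter_of_not_mixingMap hNotMix
  obtain ⟨φ, hφ⟩ := exists_isKoopmanLimit (μ := μ) T.symm.measurable 𝒰
    (f := B.indicator 1) (measurable_one.indicator hB)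
  obtain ⟨E, hE, hpos, hlt⟩ := exists_preimage_measure_pos_lt_one hφ.measurable_limit
    (hφ.not_ae_eq_const hT hA hB hAB)
  refine ⟨limitAlgebra μ T.symm 𝒰, limitAlgebra_le_self,
    measurable_limitAlgebra_of_commute hT (commute_symm T),
    measurable_limitAlgebra_of_commute (hT.symm T) (.refl _),
    ⟨φ ⁻¹' E, hφ.measurable_limitAlgebra hE, hpos, hlt⟩, fun W _ σ S hS hmix ρ hρ => ?_⟩
  exact IsFactorJoining.eq_prod (mY := limitAlgebra μ T.symm 𝒰) (T := limitAlgebraEquiv hT 𝒰) hρ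
    h𝒰 (limitAlgebra_le_limitAlgebra_trim hT) (measurePreserving_limitAlgebraEquiv hT) hS hmix

/-- **(Parreau).**  Let `T` be an ergodic automorphism of a standard probability space.
If `T` is not mixing, then `T` has a non-trivial factor (a non-trivial invariant
sub-σ-algebra `𝒞`) which is disjoint, in the sense of Furstenberg, from every mixing
automorphism: the only joining of the factor system with any mixing system is the product
measure. -/
theorem parreau_nonmixing_factor {X : Type u} [mX : MeasurableSpace X]
    [StandardBorelSpace X] (μ : Measure X) [IsProbabilityMeasure μ]
    (T : X ≃ᵐ X) (hT : MeasurePreserving T μ μ) (hErg : Ergodic T μ)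
    (hNotMix : ¬ MixingMap T μ) :
    ∃ (𝒞 : MeasurableSpace X) (h𝒞 : 𝒞 ≤ mX),
      (∀ s : Set X, MeasurableSet[𝒞] s →
        MeasurableSet[𝒞] (⇑T ⁻¹' s) ∧ MeasurableSet[𝒞] (⇑(@MeasurableEquiv.symm X X mX mX T) ⁻¹' s)) ∧
      (∃ s : Set X, MeasurableSet[𝒞] s ∧ 0 < μ s ∧ μ s < 1) ∧
      (∀ (W : Type u) [mW : MeasurableSpace W] (σ : Measure W),
        IsProbabilityMeasure σ → ∀ S : W → W, Measurable S → MeasurePreserving S σ σ →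
          MixingMap S σ →
          ∀ ρ : @Measure (X × W) (𝒞.prod mW), IsFactorJoining 𝒞 mW (μ.trim h𝒞) σ (⇑T) S ρ →
            ρ = @Measure.prod _ _ 𝒞 mW (μ.trim h𝒞) σ) := by
  obtain ⟨𝒞, h𝒞, hT𝒞, hT𝒞symm, hnontrivial, hdisj⟩ :=
    parreau_nonmixing_factor_general.{u, u} μ T hT hNotMix
  exact ⟨𝒞, h𝒞, fun _ hs => ⟨hT𝒞 hs, hT𝒞symm hs⟩, hnontrivial,
    fun W _ σ _ S _ hS hmix => hdisj W σ S hS hmix⟩
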